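/- arXiv:2011.07543 — 2 statements merged into one kernel-verified Lean document; each statement's English description precedes it below -/
import Mathlib

section
/- The unit ball functor from Ban to Met, sending a complex Banach space to its closed unit ball equipped with the metric induced by the norm (regarded as a metric space, not necessarily required to be complete as an object of the codomain), is monadic: it has a left adjoint and the comparison functor from Ban to the Eilenberg–Moore category of the induced monad is an equivalence of categories. -/
/-!
The proof applies Beck's monadicity theorem, in the form: a right adjoint is monadic if it reflects
isomorphisms and if coequalizers of its split pairs exist and are preserved.

The left adjoint sends `X` to the closed linear span of the point evaluations inside the bounded
functions on the set of nonexpanding maps from `X` to the unit disc of `ℂ`. A nonexpanding map from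
`X` to the unit ball of a Banach space `Y` extends to a linear contraction, because by Hahn–Banach
the norm of `Y` is detected by contractive functionals, and these pull back to such maps
(`norm_linearCombination_le`).

Let `f, g : A ⟶ B` be a pair whose restrictions to unit balls have a split coequalizer
`q : ball B → Z` in `Met`, and let `r` be the induced nonexpanding retraction of `ball B`, so that
`Z` is isometric to the image of `r`. The coequalizer in `Ban` is the quotient `B ⧸ N`, with `N` the
closure of the range of `f - g`; it is preserved if `ball B → ball (B ⧸ N)` is, up to isometry, `q`.

* `‖r b - r b'‖ = ‖b - b'‖` in the quotient norm (`BallSplit.norm_mk_sub`). The splitting makes the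
  relation `r b = r b'` compatible with absolutely convex combinations, hence
  `r (x + n) = r x` for `n = f a - g a` as soon as `‖x‖ + 2 ‖a‖ ≤ 1`. To compare `b` and `b'` in the
  open ball modulo an arbitrary such `n`, cut the segment joining them into `m` pieces and translate
  each piece by `n / m`, which is allowed for `m` large; the triangle inequality then gives
  `‖r b - r b'‖ ≤ ‖b - b' + n‖`.
* `ball B → ball (B ⧸ N)` is surjective (`BallSplit.exists_rep`). Its image contains the open ball,
  and it is complete since by the previous point it is isometric to the image of `r`.
-/


open CategoryTheory

/-- The category `Ban` of complex Banach spaces and linear maps of norm `≤ 1`. -/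
structure Ban : Type 1 where
  carrier : Type
  [grp : NormedAddCommGroup carrier]
  [mod : NormedSpace ℂ carrier]
  [compl : CompleteSpace carrier]

attribute [instance] Ban.grp Ban.mod Ban.compl

instance : Category Ban where
  Hom X Y := { f : X.carrier →L[ℂ] Y.carrier // ‖f‖ ≤ 1 }
  id X := ⟨ContinuousLinearMap.id ℂ X.carrier, ContinuousLinearMap.norm_id_le⟩
  comp f g := ⟨g.1.comp f.1,
    le_trans (ContinuousLinearMap.opNorm_comp_le _ _)
      (by calc ‖g.1‖ * ‖f.1‖ ≤ 1 * 1 := mul_le_mul g.2 f.2 (norm_nonneg _) zero_le_one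
          _ = 1 := mul_one 1)⟩
  id_comp f := Subtype.ext (ContinuousLinearMap.comp_id _)
  comp_id f := Subtype.ext (ContinuousLinearMap.id_comp _)
  assoc f g h := Subtype.ext ((ContinuousLinearMap.comp_assoc _ _ _))
/-- The category `Met` of metric spaces and nonexpanding maps. -/
structure Met : Type 1 where
  carrier : Type
  [met : MetricSpace carrier]

attribute [instance] Met.met

instance : Category Met where
  Hom X Y := { f : X.carrier → Y.carrier // LipschitzWith 1 f }
  id X := ⟨id, LipschitzWith.id⟩
  comp f g := ⟨g.1 ∘ f.1, by simpa using g.2.comp f.2⟩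
  id_comp f := Subtype.ext rfl
  comp_id f := Subtype.ext rfl
  assoc f g h := Subtype.ext rfl

/-- The unit ball functor `Ban ⥤ Met`, sending a Banach space to its closed unit ball
with the induced metric, regarded as an object of `Met`. -/
def unitBallMet : Ban ⥤ Met where
  obj X := { carrier := Metric.closedBall (0 : X.carrier) 1 }
  map {X Y} f :=
    ⟨fun x => ⟨f.1 x.1, by
      have hx : ‖x.1‖ ≤ 1 := by
        have hx2 := x.2
        rwa [Metric.mem_closedBall, dist_zero_right] at hx2
      rw [Metric.mem_closedBall, dist_zero_right]
      calc ‖f.1 x.1‖ ≤ ‖f.1‖ * ‖x.1‖ := f.1.le_opNorm x.1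
        _ ≤ 1 * 1 := mul_le_mul f.2 hx (norm_nonneg _) zero_le_one
        _ = 1 := mul_one 1⟩,
     LipschitzWith.of_dist_le_mul fun x y => by
      show dist (f.1 x.1) (f.1 y.1) ≤ 1 * dist x.1 y.1
      rw [one_mul]
      calc dist (f.1 x.1) (f.1 y.1) ≤ ‖f.1‖ * dist x.1 y.1 := f.1.lipschitz.dist_le_mul x.1 y.1
        _ ≤ 1 * dist x.1 y.1 := mul_le_mul_of_nonneg_right f.2 dist_nonneg
        _ = dist x.1 y.1 := one_mul _⟩
  map_id X := Subtype.ext (funext fun x => Subtype.ext rfl)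
  map_comp f g := Subtype.ext (funext fun x => Subtype.ext rfl)

/-! ### Split pairs on unit balls: the metric of the quotient -/

section Analysis

variable {A B : Type*} [NormedAddCommGroup A] [NormedSpace ℂ A] [NormedAddCommGroup B]
  [NormedSpace ℂ B]

lemma exists_norm_smul_eq {E : Type*} [NormedAddCommGroup E] [NormedSpace ℂ E] (v : E) :
    ∃ u : E, ‖u‖ ≤ 1 ∧ v = (‖v‖ : ℂ) • u := by
  by_cases hv : v = 0
  · exact ⟨0, by simp, by simp [hv]⟩
  · have hv' : ‖v‖ ≠ 0 := norm_ne_zero_iff.mpr hv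
    refine ⟨(‖v‖ : ℂ)⁻¹ • v, ?_, ?_⟩
    · rw [norm_smul]; simp [hv']
    · rw [smul_smul, mul_inv_cancel₀ (by exact_mod_cast hv'), one_smul]

/-- The data of a split coequalizer of the restrictions of `f` and `g` to unit balls, stated on the
ambient spaces: `t` is the common section of `g` and `r = f ∘ t` is the composite of the
coequalizer with its section. The values of `r` and `t` outside the unit ball are irrelevant, and
the coequalizer object is recorded only through `r`. -/
structure BallSplit (f g : A →L[ℂ] B) (r : B → B) (t : B → A) : Prop where
  hf : ‖f‖ ≤ 1
  hg : ‖g‖ ≤ 1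
  norm_t_le : ∀ b, ‖b‖ ≤ 1 → ‖t b‖ ≤ 1
  g_t : ∀ b, ‖b‖ ≤ 1 → g (t b) = b
  f_t : ∀ b, ‖b‖ ≤ 1 → f (t b) = r b
  r_eq : ∀ a, ‖a‖ ≤ 1 → r (f a) = r (g a)
  nonexp : ∀ b b', ‖b‖ ≤ 1 → ‖b'‖ ≤ 1 → ‖r b - r b'‖ ≤ ‖b - b'‖

namespace BallSplit

variable {f g : A →L[ℂ] B} {r : B → B} {t : B → A} (h : BallSplit f g r t)
include h

lemma norm_f_le (a : A) : ‖f a‖ ≤ ‖a‖ := by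
  simpa using f.le_of_opNorm_le h.hf a

lemma norm_g_le (a : A) : ‖g a‖ ≤ ‖a‖ := by
  simpa using g.le_of_opNorm_le h.hg a

lemma norm_r_le {b : B} (hb : ‖b‖ ≤ 1) : ‖r b‖ ≤ 1 := by
  rw [← h.f_t b hb]
  exact (h.norm_f_le _).trans (h.norm_t_le b hb)

/-- The relation `r b = r b'` is compatible with absolutely convex combinations: lift the
combination along `t` and apply `r ∘ f = r ∘ g`. -/
lemma r_comb {l m : ℂ} (hlm : ‖l‖ + ‖m‖ ≤ 1) {x y : B} (hx : ‖x‖ ≤ 1) (hy : ‖y‖ ≤ 1) :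
    r (l • x + m • y) = r (l • r x + m • r y) := by
  have h1 : ‖l • t x + m • t y‖ ≤ 1 := by
    refine (norm_add_le _ _).trans ?_
    rw [norm_smul, norm_smul]
    have := mul_le_of_le_one_right (norm_nonneg l) (h.norm_t_le x hx)
    have := mul_le_of_le_one_right (norm_nonneg m) (h.norm_t_le y hy)
    linarith
  have := h.r_eq _ h1
  simpa [h.f_t, h.g_t, hx, hy] using this.symm

/-- `r_comb` for the normalisations of `x` and of `f a`, `g a`. -/
lemma r_add_f {x : B} {a : A} (hxa : ‖x‖ + ‖a‖ ≤ 1) : r (x + f a) = r (x + g a) := by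
  obtain ⟨y, hy, hxy⟩ := exists_norm_smul_eq x
  obtain ⟨c, hc, hac⟩ := exists_norm_smul_eq a
  have hlm : ‖(‖x‖ : ℂ)‖ + ‖(‖a‖ : ℂ)‖ ≤ 1 := by simpa using hxa
  rw [hac, map_smul, map_smul, hxy]
  generalize (‖x‖ : ℂ) = l at *
  generalize (‖a‖ : ℂ) = m at *
  rw [h.r_comb hlm hy ((h.norm_f_le c).trans hc), h.r_comb hlm hy ((h.norm_g_le c).trans hc),
    h.r_eq c hc]

/-- Small translations along the range of `f - g` do not change `r`. -/
lemma r_add_sub {x : B} {a : A} (hxa : ‖x‖ + 2 * ‖a‖ ≤ 1) : r (x + (f a - g a)) = r x := by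
  have h1 : ‖x - g a‖ + ‖a‖ ≤ 1 := by
    have := norm_sub_le x (g a)
    have := h.norm_g_le a
    linarith
  have := h.r_add_f h1
  rw [sub_add_cancel] at this
  rw [← this]
  congr 1
  abel

/-- Subdivide the segment from `b'` to `b` so finely that each step can be translated by the
corresponding fraction of `f a - g a` inside the ball. -/
lemma norm_r_sub_le_of_lt {b b' : B} (hb : ‖b‖ < 1) (hb' : ‖b'‖ < 1) (a : A) :
    ‖r b - r b'‖ ≤ ‖b - b' + (f a - g a)‖ := by
  set M := max ‖b‖ ‖b'‖ with hM
  have hM1 : M < 1 := max_lt hb hb'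
  obtain ⟨m, hm⟩ := exists_nat_gt (2 * ‖a‖ / (1 - M))
  have hmpos : (0 : ℝ) < m := lt_of_le_of_lt (div_nonneg (by positivity) (by linarith)) hm
  have hm' : 2 * ‖a‖ / m ≤ 1 - M := by
    rw [div_lt_iff₀ (by linarith)] at hm
    rw [div_le_iff₀ hmpos]
    linarith
  have hmC : (m : ℂ) ≠ 0 := by exact_mod_cast hmpos.ne'
  let p : ℕ → B := fun i => b' + ((i : ℂ) / m) • (b - b')
  have hp : ∀ i ≤ m, ‖p i‖ ≤ M := by
    intro i hi
    have hi0 : (0 : ℝ) ≤ (i : ℝ) / m := by positivity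
    have hi1 : (i : ℝ) / m ≤ 1 := by
      rw [div_le_one hmpos]; exact_mod_cast hi
    have e : p i = ((1 - (i : ℝ) / m : ℝ) : ℂ) • b' + (((i : ℝ) / m : ℝ) : ℂ) • b := by
      simp only [p]; push_cast; module
    rw [e]
    refine (norm_add_le _ _).trans ?_
    rw [norm_smul, norm_smul, Complex.norm_real, Complex.norm_real, Real.norm_of_nonneg hi0,
      Real.norm_of_nonneg (by linarith)]
    have := mul_le_mul_of_nonneg_left (le_max_left ‖b‖ ‖b'‖) hi0
    have := mul_le_mul_of_nonneg_left (le_max_right ‖b‖ ‖b'‖) (sub_nonneg.2 hi1)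
    rw [← hM] at *
    linarith
  have hsmall : ‖((m : ℂ)⁻¹) • a‖ = ‖a‖ / m := by
    rw [norm_smul, norm_inv, Complex.norm_natCast]; ring
  have step : ∀ i < m, ‖r (p (i + 1)) - r (p i)‖ ≤ ‖b - b' + (f a - g a)‖ / m := by
    intro i hi
    have h1 := hp (i + 1) hi
    have h0 := hp i hi.le
    have h2 : ‖p (i + 1)‖ + 2 * ‖((m : ℂ)⁻¹) • a‖ ≤ 1 := by
      rw [hsmall]
      have : 2 * (‖a‖ / m) = 2 * ‖a‖ / m := by ring
      linarith
    have h3 : ‖p (i + 1) + (f (((m : ℂ)⁻¹) • a) - g (((m : ℂ)⁻¹) • a))‖ ≤ 1 := by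
      refine (norm_add_le _ _).trans ?_
      have := norm_sub_le (f (((m : ℂ)⁻¹) • a)) (g (((m : ℂ)⁻¹) • a))
      have := h.norm_f_le (((m : ℂ)⁻¹) • a)
      have := h.norm_g_le (((m : ℂ)⁻¹) • a)
      linarith
    rw [← h.r_add_sub h2]
    refine (h.nonexp _ _ h3 (by linarith)).trans ?_
    have e : p (i + 1) + (f (((m : ℂ)⁻¹) • a) - g (((m : ℂ)⁻¹) • a)) - p i
        = ((m : ℂ)⁻¹) • (b - b' + (f a - g a)) := by
      simp only [p, map_smul]; push_cast; module
    rw [e, norm_smul, norm_inv, Complex.norm_natCast, div_eq_inv_mul]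
  have hsum : ∀ i ≤ m, ‖r (p i) - r (p 0)‖ ≤ i * (‖b - b' + (f a - g a)‖ / m) := by
    intro i
    induction i with
    | zero => simp
    | succ i ih =>
      intro hi
      have h1 := ih (by omega)
      have h2 := step i (by omega)
      have h3 := norm_sub_le_norm_sub_add_norm_sub (r (p (i + 1))) (r (p i)) (r (p 0))
      push_cast
      linarith
  have := hsum m le_rfl
  have e1 : p m = b := by simp [p, hmC]
  have e0 : p 0 = b' := by simp [p]
  rw [e1, e0] at this
  rwa [mul_div_cancel₀ _ hmpos.ne'] at this

/-- Extension of `norm_r_sub_le_of_lt` to the closed ball, by shrinking `b` and `b'` slightly. -/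
lemma norm_r_sub_le {b b' : B} (hb : ‖b‖ ≤ 1) (hb' : ‖b'‖ ≤ 1) (a : A) :
    ‖r b - r b'‖ ≤ ‖b - b' + (f a - g a)‖ := by
  have key : ∀ δ : ℝ, 0 < δ → δ ≤ 1 →
      ‖r b - r b'‖ ≤ ‖b - b' + (f a - g a)‖ + 4 * δ := by
    intro δ h0 h1
    have hnorm : ‖((1 - δ : ℝ) : ℂ)‖ = 1 - δ := by
      rw [Complex.norm_real, Real.norm_of_nonneg (by linarith)]
    have shrink : ∀ x : B, ‖x‖ ≤ 1 → ‖((1 - δ : ℝ) : ℂ) • x‖ < 1 ∧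
        ‖x - ((1 - δ : ℝ) : ℂ) • x‖ ≤ δ := by
      intro x hx
      constructor
      · rw [norm_smul, hnorm]
        nlinarith [norm_nonneg x]
      · have : x - ((1 - δ : ℝ) : ℂ) • x = (δ : ℂ) • x := by push_cast; module
        rw [this, norm_smul, Complex.norm_real, Real.norm_of_nonneg h0.le]
        nlinarith [norm_nonneg x]
    obtain ⟨s1, s2⟩ := shrink b hb
    obtain ⟨s1', s2'⟩ := shrink b' hb'
    generalize ((1 - δ : ℝ) : ℂ) • b = c at *
    generalize ((1 - δ : ℝ) : ℂ) • b' = c' at *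
    have e1 := (h.nonexp b c hb s1.le).trans s2
    have e2 := (h.nonexp b' c' hb' s1'.le).trans s2'
    have e3 := h.norm_r_sub_le_of_lt s1 s1' a
    have e4 : ‖r b - r b'‖ ≤ ‖r b - r c‖ + ‖r c - r c'‖ + ‖r b' - r c'‖ := by
      have : r b - r b' = (r b - r c) + (r c - r c') - (r b' - r c') := by abel
      rw [this]
      exact (norm_sub_le _ _).trans (add_le_add_left (norm_add_le _ _) _)
    have e5 : ‖c - c' + (f a - g a)‖ ≤ ‖b - b' + (f a - g a)‖ + ‖b - c‖ + ‖b' - c'‖ := by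
      have : c - c' + (f a - g a) = (b - b' + (f a - g a)) - (b - c) + (b' - c') := by abel
      rw [this]
      exact (norm_add_le _ _).trans (add_le_add_left (norm_sub_le _ _) _)
    linarith
  refine le_of_forall_pos_le_add fun ε hε => ?_
  have := key (min (ε / 4) 1) (by positivity) (min_le_right _ _)
  have := min_le_left (ε / 4) 1
  linarith

end BallSplit

/-- The closure of the range of `f - g`; the quotient by it is the coequalizer of `f` and `g`. -/
abbrev coeqSub (f g : A →L[ℂ] B) : Submodule ℂ B := (f - g).range.topologicalClosure

instance (f g : A →L[ℂ] B) : IsClosed (coeqSub f g : Set B) :=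
  Submodule.isClosed_topologicalClosure _

namespace BallSplit

variable {f g : A →L[ℂ] B} {r : B → B} {t : B → A} (h : BallSplit f g r t)
include h

lemma mk_r {b : B} (hb : ‖b‖ ≤ 1) : (coeqSub f g).mkQ (r b) = (coeqSub f g).mkQ b := by
  rw [← sub_eq_zero, ← map_sub, Submodule.mkQ_apply, Submodule.Quotient.mk_eq_zero]
  refine Submodule.le_topologicalClosure _ ⟨t b, ?_⟩
  simp [h.f_t b hb, h.g_t b hb]

/-- The distance of `r b` and `r b'` is the quotient distance: `r` moves points along the range of
`f - g`, and conversely elements of that range do not affect the distance, by `norm_r_sub_le`. -/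
lemma norm_mk_sub {b b' : B} (hb : ‖b‖ ≤ 1) (hb' : ‖b'‖ ≤ 1) :
    ‖r b - r b'‖ = ‖(coeqSub f g).mkQ b - (coeqSub f g).mkQ b'‖ := by
  apply le_antisymm
  · rw [← map_sub]
    refine le_of_forall_pos_le_add fun ε hε => ?_
    obtain ⟨c, hc, hc'⟩ := Submodule.Quotient.norm_mk_lt ((coeqSub f g).mkQ (b - b')) (half_pos hε)
    have hmem : c - (b - b') ∈ coeqSub f g := (Submodule.Quotient.eq _).1 hc
    obtain ⟨_, ⟨a, rfl⟩, ha⟩ := Metric.mem_closure_iff.1 hmem (ε / 2) (half_pos hε)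
    have h1 := h.norm_r_sub_le hb hb' a
    have h2 : ‖b - b' + (f a - g a)‖ ≤ ‖c‖ + dist (c - (b - b')) (f a - g a) := by
      have : b - b' + (f a - g a) = c - (c - (b - b') - (f a - g a)) := by abel
      rw [this, dist_eq_norm]
      exact norm_sub_le _ _
    have h3 : dist (c - (b - b')) (f a - g a) < ε / 2 := ha
    linarith
  · rw [← h.mk_r hb, ← h.mk_r hb', ← map_sub]
    exact Submodule.Quotient.norm_mk_le _ _

/-- The unit ball of `B` maps onto the closed, not merely the open, unit ball of the quotient: if
representatives `b k` approximate `c`, then `r (b k)` is a Cauchy sequence, and its limit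
represents `c`. -/
lemma exists_rep [CompleteSpace B] (c : B ⧸ coeqSub f g) (hc : ‖c‖ ≤ 1) :
    ∃ b, ‖b‖ ≤ 1 ∧ (coeqSub f g).mkQ b = c := by
  let u : ℕ → ℂ := fun k => 1 - 1 / ((k : ℂ) + 1)
  have hu : Filter.Tendsto (fun k => u k • c) Filter.atTop (nhds c) := by
    have : Filter.Tendsto u Filter.atTop (nhds (1 - 0)) :=
      tendsto_const_nhds.sub tendsto_one_div_add_atTop_nhds_zero_nat
    simpa using this.smul_const c
  have hlt : ∀ k, ‖u k • c‖ < 1 := by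
    intro k
    have e : u k = ((1 - 1 / ((k : ℝ) + 1) : ℝ) : ℂ) := by simp [u]
    have h1 : 0 < 1 / ((k : ℝ) + 1) := by positivity
    have h2 : 1 / ((k : ℝ) + 1) ≤ 1 := by
      rw [div_le_one (by positivity)]; linarith [(Nat.cast_nonneg k : (0 : ℝ) ≤ k)]
    rw [norm_smul, e, Complex.norm_real, Real.norm_of_nonneg (by linarith)]
    nlinarith [norm_nonneg c]
  have hrep : ∀ k, ∃ b, ‖b‖ ≤ 1 ∧ (coeqSub f g).mkQ b = u k • c := by
    intro k
    obtain ⟨b, hb, hb'⟩ := Submodule.Quotient.norm_mk_lt (u k • c) (sub_pos.2 (hlt k))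
    exact ⟨b, by linarith, hb⟩
  choose b hb hbc using hrep
  have hcau : CauchySeq (fun k => r (b k)) := by
    have := Metric.cauchySeq_iff.1 hu.cauchySeq
    rw [Metric.cauchySeq_iff]
    simpa only [dist_eq_norm, h.norm_mk_sub (hb _) (hb _), hbc] using this
  obtain ⟨x, hx⟩ := cauchySeq_tendsto_of_complete hcau
  refine ⟨x, le_of_tendsto hx.norm (Filter.Eventually.of_forall fun k => h.norm_r_le (hb k)), ?_⟩
  have hcont : Continuous (coeqSub f g).mkQ :=
    AddMonoidHomClass.continuous_of_bound (coeqSub f g).mkQ 1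
      fun y => by simpa using Submodule.Quotient.norm_mk_le _ y
  have h1 := (hcont.tendsto x).comp hx
  have h2 : ((coeqSub f g).mkQ ∘ fun k => r (b k)) = fun k => u k • c := by
    funext k
    simp only [Function.comp, h.mk_r (hb k), hbc]
  rw [h2] at h1
  exact tendsto_nhds_unique h1 hu

end BallSplit
end Analysis

/-! ### Coequalizers in `Ban` and their preservation -/

section Coequalizer

open CategoryTheory.Limits

lemma mem_unitBall {X : Ban} (x : (unitBallMet.obj X).carrier) : ‖x.1‖ ≤ 1 :=
  mem_closedBall_zero_iff.1 x.2

/-- The point of `unitBallMet.obj X` given by a vector of norm at most one. -/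
def toBall {X : Ban} (x : X.carrier) (hx : ‖x‖ ≤ 1) : (unitBallMet.obj X).carrier :=
  ⟨x, mem_closedBall_zero_iff.2 hx⟩

lemma Ban.norm_hom_le {X Y : Ban} (f : X ⟶ Y) (x : X.carrier) : ‖f.1 x‖ ≤ ‖x‖ := by
  simpa using f.1.le_of_opNorm_le f.2 x

lemma Ban.hom_ext {X Y : Ban} {f g : X ⟶ Y} (h : ∀ x, f.1 x = g.1 x) : f = g :=
  Subtype.ext (ContinuousLinearMap.ext h)

lemma Ban.hom_congr {X Y : Ban} {f g : X ⟶ Y} (h : f = g) (x : X.carrier) : f.1 x = g.1 x := by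
  rw [h]

lemma Met.hom_ext {X Y : Met} {f g : X ⟶ Y} (h : ∀ x, f.1 x = g.1 x) : f = g :=
  Subtype.ext (funext h)

lemma Met.hom_congr {X Y : Met} {f g : X ⟶ Y} (h : f = g) (x : X.carrier) : f.1 x = g.1 x := by
  rw [h]

/-- A morphism of `Ban` from a linear map that does not increase norms. -/
noncomputable def Ban.mkHom {X Y : Ban} (f : X.carrier →ₗ[ℂ] Y.carrier) (hf : ∀ x, ‖f x‖ ≤ ‖x‖) : X ⟶ Y :=
  ⟨f.mkContinuous 1 (by simpa using hf), f.mkContinuous_norm_le zero_le_one _⟩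

variable {A B : Ban} (f g : A ⟶ B)

/-- The coequalizer object of `f` and `g` in `Ban`. -/
noncomputable def Ban.coeqObj : Ban where
  carrier := B.carrier ⧸ coeqSub f.1 g.1

/-- The quotient map onto the coequalizer. -/
noncomputable def Ban.coeqπ : B ⟶ Ban.coeqObj f g :=
  Ban.mkHom (Y := Ban.coeqObj f g) (coeqSub f.1 g.1).mkQ
    fun x => Submodule.Quotient.norm_mk_le (S := coeqSub f.1 g.1) x

lemma Ban.coeqπ_apply (x : B.carrier) : (Ban.coeqπ f g).1 x = (coeqSub f.1 g.1).mkQ x := rfl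

lemma Ban.coeq_condition : f ≫ Ban.coeqπ f g = g ≫ Ban.coeqπ f g := by
  refine Ban.hom_ext fun x => ?_
  change (coeqSub f.1 g.1).mkQ (f.1 x) = (coeqSub f.1 g.1).mkQ (g.1 x)
  rw [← sub_eq_zero, ← map_sub, Submodule.mkQ_apply, Submodule.Quotient.mk_eq_zero]
  exact Submodule.le_topologicalClosure _ ⟨x, rfl⟩

lemma Ban.map_coeq_condition :
    unitBallMet.map f ≫ unitBallMet.map (Ban.coeqπ f g) =
      unitBallMet.map g ≫ unitBallMet.map (Ban.coeqπ f g) := by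
  rw [← unitBallMet.map_comp, Ban.coeq_condition, unitBallMet.map_comp]

variable {f g}

lemma Ban.coeqSub_le_ker {W : Ban} (k : B ⟶ W) (hk : f ≫ k = g ≫ k) :
    coeqSub f.1 g.1 ≤ k.1.ker := by
  refine Submodule.topologicalClosure_minimal _ ?_ k.1.isClosed_ker
  rintro _ ⟨a, rfl⟩
  have : k.1 (f.1 a) = k.1 (g.1 a) := Ban.hom_congr hk a
  simp [this]

/-- The map induced on the coequalizer. -/
noncomputable def Ban.coeqDesc {W : Ban} (k : B ⟶ W) (hk : f ≫ k = g ≫ k) : Ban.coeqObj f g ⟶ W :=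
  Ban.mkHom (X := Ban.coeqObj f g) ((coeqSub f.1 g.1).liftQ k.1.toLinearMap
    (Ban.coeqSub_le_ker k hk)) fun x => by
      refine le_of_forall_pos_le_add fun ε hε => ?_
      obtain ⟨c, rfl, hc'⟩ := Submodule.Quotient.norm_mk_lt (S := coeqSub f.1 g.1) x hε
      exact (Ban.norm_hom_le k c).trans hc'.le

variable (f g)

/-- The quotient map is a coequalizer in `Ban`. -/
noncomputable def Ban.coeqIsColimit : IsColimit (Cofork.ofπ (Ban.coeqπ f g) (Ban.coeq_condition f g)) :=
  Cofork.IsColimit.mk' _ fun s =>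
    ⟨Ban.coeqDesc s.π s.condition, rfl, fun {m} hm => by
      refine Ban.hom_ext fun x => ?_
      obtain ⟨b, rfl⟩ := Submodule.mkQ_surjective (coeqSub f.1 g.1) x
      exact Ban.hom_congr hm b⟩

variable {f g}

open scoped Classical in
/-- Extension of a map between unit balls by zero to the whole space. -/
noncomputable def ballExt {X Y : Ban} (k : unitBallMet.obj X ⟶ unitBallMet.obj Y)
    (b : X.carrier) : Y.carrier :=
  if h : ‖b‖ ≤ 1 then (k.1 (toBall b h)).1 else 0

lemma ballExt_of_le {X Y : Ban} (k : unitBallMet.obj X ⟶ unitBallMet.obj Y) {b : X.carrier}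
    (h : ‖b‖ ≤ 1) : ballExt k b = (k.1 (toBall b h)).1 := by
  simp [ballExt, h]

lemma Met.norm_sub_le {X Y : Ban} (k : unitBallMet.obj X ⟶ unitBallMet.obj Y)
    {x y : X.carrier} (hx : ‖x‖ ≤ 1) (hy : ‖y‖ ≤ 1) :
    ‖(k.1 (toBall x hx)).1 - (k.1 (toBall y hy)).1‖ ≤ ‖x - y‖ := by
  have := k.2.dist_le_mul (toBall x hx) (toBall y hy)
  rw [NNReal.coe_one, one_mul] at this
  rw [← dist_eq_norm, ← dist_eq_norm]
  exact this

/-- A splitting of the pair in `Met` gives the data of `BallSplit`, with `r` the retraction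
`q ≫ S.rightSection` and `t` the section `S.leftSection`. -/
lemma ballSplit_of_isSplitCoequalizer {Z : Met} {q : unitBallMet.obj B ⟶ Z}
    (S : IsSplitCoequalizer (unitBallMet.map f) (unitBallMet.map g) q) :
    BallSplit f.1 g.1 (ballExt (q ≫ S.rightSection)) (ballExt S.leftSection) where
  hf := f.2
  hg := g.2
  norm_t_le b hb := by rw [ballExt_of_le _ hb]; exact mem_unitBall _
  g_t b hb := by
    rw [ballExt_of_le _ hb]
    exact congrArg Subtype.val (Met.hom_congr S.leftSection_bottom (toBall b hb))
  f_t b hb := by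
    rw [ballExt_of_le _ hb, ballExt_of_le _ hb]
    exact congrArg Subtype.val (Met.hom_congr S.leftSection_top (toBall b hb))
  r_eq a ha := by
    rw [ballExt_of_le _ ((Ban.norm_hom_le f a).trans ha),
      ballExt_of_le _ ((Ban.norm_hom_le g a).trans ha)]
    have := Met.hom_congr S.condition (toBall a ha)
    exact congrArg (fun z => (S.rightSection.1 z).1) this
  nonexp b b' hb hb' := by
    rw [ballExt_of_le _ hb, ballExt_of_le _ hb']
    refine (Met.norm_sub_le _ hb hb').trans le_rfl

/-- `unitBallMet` sends the coequalizer `π` of a `unitBallMet`-split pair to a coequalizer. Every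
point `c` of the unit ball of the quotient is `π (b c)` with `b c` in the unit ball, and a map `k`
coequalizing the pair descends to `c ↦ k (b c)`, which is well defined and nonexpanding because
`k` factors through `q`, and distances after `q` are the quotient distances. -/
lemma nonempty_isColimit_map {Z : Met} {q : unitBallMet.obj B ⟶ Z}
    (S : IsSplitCoequalizer (unitBallMet.map f) (unitBallMet.map g) q) :
    Nonempty (IsColimit (Cofork.ofπ (unitBallMet.map (Ban.coeqπ f g))
      (Ban.map_coeq_condition f g) :
        Cofork (unitBallMet.map f) (unitBallMet.map g))) := by
  have h := ballSplit_of_isSplitCoequalizer S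
  set r := ballExt (q ≫ S.rightSection) with hr
  have hrep : ∀ c : (unitBallMet.obj (Ban.coeqObj f g)).carrier,
      ∃ b, ∃ hb : ‖b‖ ≤ 1, (unitBallMet.map (Ban.coeqπ f g)).1 (toBall b hb) = c := by
    intro c
    obtain ⟨b, hb, hbc⟩ := h.exists_rep c.1 (mem_unitBall c)
    exact ⟨b, hb, Subtype.ext hbc⟩
  choose b hb hbc using hrep
  have hk : ∀ (W : Met) (k : unitBallMet.obj B ⟶ W),
      unitBallMet.map f ≫ k = unitBallMet.map g ≫ k → k = q ≫ S.rightSection ≫ k := by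
    intro W k hk
    rw [← S.leftSection_top_assoc, hk, S.leftSection_bottom_assoc]
  have hdist : ∀ (W : Met) (k : unitBallMet.obj B ⟶ W),
      unitBallMet.map f ≫ k = unitBallMet.map g ≫ k → ∀ x y hx hy,
      dist (k.1 (toBall x hx)) (k.1 (toBall y hy)) ≤
        dist ((unitBallMet.map (Ban.coeqπ f g)).1 (toBall x hx))
          ((unitBallMet.map (Ban.coeqπ f g)).1 (toBall y hy)) := by
    intro W k hfg x y hx hy
    rw [Met.hom_congr (hk W k hfg) (toBall x hx), Met.hom_congr (hk W k hfg) (toBall y hy)]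
    have h1 := k.2.dist_le_mul ((q ≫ S.rightSection).1 (toBall x hx))
      ((q ≫ S.rightSection).1 (toBall y hy))
    rw [NNReal.coe_one, one_mul] at h1
    refine h1.trans (le_of_eq ?_)
    have h2 := h.norm_mk_sub hx hy
    rw [hr, ballExt_of_le _ hx, ballExt_of_le _ hy, ← dist_eq_norm] at h2
    refine Eq.trans h2 ?_
    rw [← dist_eq_norm]
    rfl
  refine ⟨Cofork.IsColimit.mk' _ fun s => ⟨⟨fun c => s.π.1 (toBall (b c) (hb c)), ?_⟩, ?_, ?_⟩⟩
  · refine LipschitzWith.of_dist_le_mul fun c c' => ?_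
    rw [NNReal.coe_one, one_mul]
    refine (hdist _ s.π s.condition _ _ (hb c) (hb c')).trans (le_of_eq ?_)
    rw [hbc, hbc]
  · refine Met.hom_ext fun x => ?_
    refine dist_le_zero.1 ((hdist _ s.π s.condition _ _ (hb _) (mem_unitBall x)).trans
      (le_of_eq ?_))
    rw [hbc]
    exact dist_self _
  · intro m hm
    refine Met.hom_ext fun c => ?_
    have := Met.hom_congr hm (toBall (b c) (hb c))
    refine Eq.trans ?_ this
    exact congrArg m.1 (hbc c).symm

instance : Monad.HasCoequalizerOfIsSplitPair unitBallMet where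
  out f g _ := ⟨_, Ban.coeqIsColimit f g⟩

instance : Monad.PreservesColimitOfIsSplitPair unitBallMet where
  out f g _ := by
    obtain ⟨Z, q, ⟨S⟩⟩ := HasSplitCoequalizer.splittable
      (f := unitBallMet.map f) (g := unitBallMet.map g)
    exact preservesColimit_of_preserves_colimit_cocone (Ban.coeqIsColimit f g)
      ((isColimitMapCoconeCoforkEquiv _ _).symm (nonempty_isColimit_map S).some)

/-! ### Reflection of isomorphisms -/

/-- If the restriction of `f` to unit balls is a bijective isometry, then `f` is bijective by
homogeneity, and its inverse maps the unit ball into the unit ball. -/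
instance : unitBallMet.ReflectsIsomorphisms where
  reflects {X Y} f _ := by
    have h1 := Met.hom_congr (IsIso.hom_inv_id (unitBallMet.map f))
    have h2 := Met.hom_congr (IsIso.inv_hom_id (unitBallMet.map f))
    set i := inv (unitBallMet.map f)
    have hsurj : ∀ y, ∃ x, f.1 x = y ∧ ‖x‖ ≤ ‖y‖ := by
      intro y
      obtain ⟨u, hu, hy⟩ := exists_norm_smul_eq y
      have e : f.1 (i.1 (toBall u hu)).1 = u := congrArg Subtype.val (h2 (toBall u hu))
      refine ⟨(‖y‖ : ℂ) • (i.1 (toBall u hu)).1, by rw [map_smul, e, ← hy], ?_⟩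
      rw [norm_smul, Complex.norm_real, norm_norm]
      exact mul_le_of_le_one_right (norm_nonneg _) (mem_unitBall _)
    have hinj : Function.Injective f.1 := by
      rw [injective_iff_map_eq_zero]
      intro x hx
      obtain ⟨u, hu, hxu⟩ := exists_norm_smul_eq x
      by_cases hx0 : x = 0
      · exact hx0
      have hfu : f.1 u = f.1 0 := by
        rw [hxu, map_smul, smul_eq_zero] at hx
        rcases hx with hx | hx
        · exact absurd (by simpa using hx) hx0
        · rw [hx, map_zero]
      have h0 : ‖(0 : X.carrier)‖ ≤ 1 := by simp
      have e : (unitBallMet.map f).1 (toBall u hu) = (unitBallMet.map f).1 (toBall 0 h0) :=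
        Subtype.ext hfu
      have e' : toBall u hu = toBall 0 h0 :=
        ((h1 (toBall u hu)).symm.trans (congrArg i.1 e)).trans (h1 (toBall 0 h0))
      have : u = 0 := congrArg Subtype.val e'
      rw [hxu, this, smul_zero]
    let E := LinearEquiv.ofBijective f.1.toLinearMap
      ⟨hinj, fun y => (hsurj y).imp fun _ hx => hx.1⟩
    have hE : ∀ x, E x = f.1 x := fun _ => rfl
    refine ⟨Ban.mkHom E.symm.toLinearMap fun y => ?_, Ban.hom_ext fun x => ?_,
      Ban.hom_ext fun y => ?_⟩
    · obtain ⟨x, rfl, hx⟩ := hsurj y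
      rw [← hE] at hx ⊢
      simpa using hx
    · exact E.symm_apply_apply x
    · exact E.apply_symm_apply y

end Coequalizer

/-! ### The free Banach space on a metric space -/

section Free

/-- The nonexpanding functions from `X` to the closed unit disc of `ℂ`. -/
structure TestFun (X : Met) : Type where
  toFun : X.carrier → ℂ
  lip : LipschitzWith 1 toFun
  bound : ∀ x, ‖toFun x‖ ≤ 1

/-- The discrete topology, so that bounded continuous functions on `TestFun X` are all bounded
functions. -/
instance (X : Met) : TopologicalSpace (TestFun X) := ⊥

instance (X : Met) : DiscreteTopology (TestFun X) := ⟨rfl⟩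

open BoundedContinuousFunction in
/-- Evaluation at a point, as a bounded function of the test function. -/
noncomputable def evalAt (X : Met) (x : X.carrier) : TestFun X →ᵇ ℂ :=
  ofNormedAddCommGroupDiscrete (fun φ => φ.toFun x) 1 fun φ => φ.bound x

open BoundedContinuousFunction in
/-- Formal linear combinations of points as functions of the test function. -/
noncomputable def preFree (X : Met) : (X.carrier →₀ ℂ) →ₗ[ℂ] (TestFun X →ᵇ ℂ) :=
  Finsupp.linearCombination ℂ (evalAt X)

/-- The free Banach space on `X`: the closed linear span of the point evaluations. -/
noncomputable def freeBan (X : Met) : Ban where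
  carrier := (preFree X).range.topologicalClosure
  compl := (Submodule.isClosed_topologicalClosure _).completeSpace_coe

/-- The dense map from formal linear combinations of points to the free Banach space. -/
noncomputable def toFree (X : Met) : (X.carrier →₀ ℂ) →ₗ[ℂ] (freeBan X).carrier :=
  (preFree X).codRestrict (preFree X).range.topologicalClosure
    fun a => Submodule.le_topologicalClosure _ ⟨a, rfl⟩

lemma norm_toFree (X : Met) (a : X.carrier →₀ ℂ) : ‖toFree X a‖ = ‖preFree X a‖ := rfl

lemma denseRange_codRestrict {E F : Type*} [AddCommGroup E] [Module ℂ E] [NormedAddCommGroup F]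
    [NormedSpace ℂ F] (L : E →ₗ[ℂ] F) :
    DenseRange (L.codRestrict L.range.topologicalClosure
      fun a => Submodule.le_topologicalClosure _ ⟨a, rfl⟩) := by
  intro y
  rw [Topology.IsInducing.subtypeVal.closure_eq_preimage_closure_image, ← Set.range_comp]
  exact y.2

lemma denseRange_toFree (X : Met) : DenseRange (toFree X) :=
  denseRange_codRestrict (preFree X)

lemma preFree_apply (X : Met) (a : X.carrier →₀ ℂ) (φ : TestFun X) :
    preFree X a φ = Finsupp.linearCombination ℂ φ.toFun a := by
  induction a using Finsupp.induction_linear with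
  | zero => simp
  | add a b ha hb => simp [ha, hb]
  | single x c => simp [preFree, evalAt]

/-- By Hahn–Banach, the test functions detect the norm of any linear combination of values of a
nonexpanding map into the unit ball of a Banach space. -/
lemma norm_linearCombination_le {X : Met} {Y : Ban} (k : X ⟶ unitBallMet.obj Y)
    (a : X.carrier →₀ ℂ) :
    ‖Finsupp.linearCombination ℂ (fun x => (k.1 x).1) a‖ ≤ ‖toFree X a‖ := by
  obtain ⟨ψ, hψ, hψa⟩ := exists_dual_vector'' ℂ
    (Finsupp.linearCombination ℂ (fun x => (k.1 x).1) a)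
  have hle : ∀ y, ‖ψ y‖ ≤ ‖y‖ := fun y => by simpa using ψ.le_of_opNorm_le hψ y
  let φ : TestFun X := ⟨fun x => ψ (k.1 x).1, by
    refine LipschitzWith.of_dist_le_mul fun x y => ?_
    rw [dist_eq_norm, ← map_sub]
    refine (hle _).trans ?_
    rw [← dist_eq_norm]
    exact k.2.dist_le_mul x y, fun x => (hle _).trans (mem_unitBall _)⟩
  have h1 : preFree X a φ = ψ (Finsupp.linearCombination ℂ (fun x => (k.1 x).1) a) := by
    rw [preFree_apply]
    exact (Finsupp.apply_linearCombination ℂ ψ.toLinearMap _ a).symm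
  have h2 := (preFree X a).norm_coe_le_norm φ
  rw [h1, hψa] at h2
  simpa [norm_toFree] using h2

/-- The unit of the adjunction: a point is sent to the evaluation at it. -/
noncomputable def freeUnit (X : Met) : X ⟶ unitBallMet.obj (freeBan X) :=
  ⟨fun x => toBall (toFree X (Finsupp.single x 1)) (by
      rw [norm_toFree, BoundedContinuousFunction.norm_le zero_le_one]
      intro φ
      simpa [preFree_apply] using φ.bound x),
    LipschitzWith.of_dist_le_mul fun x y => by
      change dist (toFree X (Finsupp.single x 1)) (toFree X (Finsupp.single y 1)) ≤ _
      rw [dist_eq_norm, ← map_sub, norm_toFree, BoundedContinuousFunction.norm_le (by positivity)]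
      intro φ
      simpa [preFree_apply, dist_eq_norm] using φ.lip.dist_le_mul x y⟩

/-- The extension of a nonexpanding map into a unit ball to the free Banach space. -/
noncomputable def freeLift {X : Met} {Y : Ban} (k : X ⟶ unitBallMet.obj Y) : freeBan X ⟶ Y :=
  ⟨(Finsupp.linearCombination ℂ (fun x => (k.1 x).1)).extendOfNorm (toFree X),
    LinearMap.opNorm_extendOfNorm_le (denseRange_toFree X) zero_le_one
      fun a => by simpa using norm_linearCombination_le k a⟩

lemma freeLift_toFree {X : Met} {Y : Ban} (k : X ⟶ unitBallMet.obj Y) (a : X.carrier →₀ ℂ) :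
    (freeLift k).1 (toFree X a) = Finsupp.linearCombination ℂ (fun x => (k.1 x).1) a :=
  LinearMap.extendOfNorm_eq (denseRange_toFree X)
    ⟨1, fun a => by simpa using norm_linearCombination_le k a⟩ a

lemma freeUnit_lift {X : Met} {Y : Ban} (k : X ⟶ unitBallMet.obj Y) :
    freeUnit X ≫ unitBallMet.map (freeLift k) = k := by
  refine Met.hom_ext fun x => Subtype.ext ?_
  refine (freeLift_toFree k (Finsupp.single x 1)).trans ?_
  simp

lemma freeBan_hom_ext {X : Met} {Y : Ban} {F G : freeBan X ⟶ Y}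
    (h : freeUnit X ≫ unitBallMet.map F = freeUnit X ≫ unitBallMet.map G) : F = G := by
  have hpt : ∀ x, F.1 (toFree X (Finsupp.single x 1)) = G.1 (toFree X (Finsupp.single x 1)) :=
    fun x => congrArg Subtype.val (Met.hom_congr h x)
  have hlin : F.1.toLinearMap ∘ₗ toFree X = G.1.toLinearMap ∘ₗ toFree X := by
    refine Finsupp.lhom_ext' fun x => LinearMap.ext_ring ?_
    exact hpt x
  refine Ban.hom_ext fun y => congrFun ((denseRange_toFree X).equalizer F.1.continuous
    G.1.continuous (funext fun a => LinearMap.congr_fun hlin a)) y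

/-- The universal property of the free Banach space. -/
noncomputable def freeEquiv (X : Met) (Y : Ban) :
    (freeBan X ⟶ Y) ≃ (X ⟶ unitBallMet.obj Y) where
  toFun F := freeUnit X ≫ unitBallMet.map F
  invFun k := freeLift k
  left_inv _ := freeBan_hom_ext (freeUnit_lift _)
  right_inv k := freeUnit_lift k

end Free

/-- The unit ball functor `Ban ⥤ Met` is monadic. -/
theorem unitBallMet_monadic : Nonempty (MonadicRightAdjoint unitBallMet) := by
  have adj := Adjunction.adjunctionOfEquivLeft (G := unitBallMet) freeEquiv
    fun X Y Y' g h => by simp [freeEquiv]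
  exact ⟨Monad.monadicOfHasPreservesGSplitCoequalizersOfReflectsIsomorphisms adj⟩
end

section
/- The forgetful functor G : C*Alg → Ban from unital C*-algebras to complex Banach spaces has a left adjoint F, and the unit η_B : B → G(F(B)) of this adjunction is a linear isometry for every complex Banach space B; consequently F is faithful. -/
/-!
The algebra `F(B)` is the universal C⋆-algebra generated by a contractive linear image of `B`,
realised inside a product of sufficiently many contractions `B → A`.

Every contraction `f : B → A` assigns to a noncommutative ⋆-polynomial `w` in the elements of `B`
the norm of its value `w(f)`. The resulting function, the *profile* of `f`, determines the closed
⋆-subalgebra generated by `f(B)`, and the profiles form a small set although the contractions do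
not. Choose one contraction `fᵢ : B → Aᵢ` for each profile `i`, and let `F(B)` be the closed
⋆-subalgebra of the `ℓ^∞`-product of the `Aᵢ` generated by the elements `η b = (fᵢ b)ᵢ`.

For any contraction `f : B → A` one has `‖w(f)‖ ≤ ‖w(η)‖` for all `w`, since `f` shares its profile
with some `fᵢ`. This is enough to extend `η b ↦ f b` to a ⋆-homomorphism on `F(B)`
(`exists_starAlgHom_of_norm_le`): the closed ⋆-subalgebra of `F(B) × A` generated by the pairs
`(η b, f b)` projects isometrically onto `F(B)`, so it is the graph of the required map.
Uniqueness holds because `η(B)` generates `F(B)`.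

The unit `η` is isometric because functionals `B → ℂ` of norm at most one factor through it, and by
Hahn–Banach these attain the norm of every vector. In particular `η` is injective, so `F` is
faithful.
-/

open CategoryTheory

/-- The category `C*Alg` of unital C⋆-algebras and unital ⋆-homomorphisms. -/
structure CStarAlg : Type 1 where
  carrier : Type
  [inst : CStarAlgebra carrier]

attribute [instance] CStarAlg.inst

instance : Category CStarAlg where
  Hom X Y := X.carrier →⋆ₐ[ℂ] Y.carrier
  id X := StarAlgHom.id ℂ X.carrier
  comp f g := g.comp f
  id_comp f := StarAlgHom.ext fun _ => rfl
  comp_id f := StarAlgHom.ext fun _ => rfl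
  assoc f g h := StarAlgHom.ext fun _ => rfl

/-- The forgetful functor `G : C*Alg ⥤ Ban` (star homomorphisms between C⋆-algebras
automatically have norm `≤ 1`). -/
noncomputable def CStarForget : CStarAlg ⥤ Ban where
  obj X := { carrier := X.carrier }
  map {X Y} f :=
    let g : X.carrier →⋆ₐ[ℂ] Y.carrier := f
    ⟨LinearMap.mkContinuous g.toAlgHom.toLinearMap 1
      (fun x => by rw [one_mul]; exact NonUnitalStarAlgHom.norm_apply_le g x),
     LinearMap.mkContinuous_norm_le _ zero_le_one _⟩
  map_id X := Subtype.ext (ContinuousLinearMap.ext fun _ => rfl)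
  map_comp f g := Subtype.ext (ContinuousLinearMap.ext fun _ => rfl)

open scoped ENNReal
namespace BanCStar

section Words

variable {B A C : Type} [CStarAlgebra A] [CStarAlgebra C]

/-- The value at `f : B → A` of a noncommutative ⋆-polynomial with variables in `B`. A ⋆-polynomial
is encoded as an element of the free algebra on `B ⊕ B`, the second copy of `B` standing for the
adjoints of the variables. -/
noncomputable def evalWord (f : B → A) : FreeAlgebra ℂ (B ⊕ B) →ₐ[ℂ] A :=
  FreeAlgebra.lift ℂ (Sum.elim f fun b => star (f b))

lemma map_evalWord (h : C →⋆ₐ[ℂ] A) (g : B → C) (w : FreeAlgebra ℂ (B ⊕ B)) :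
    h (evalWord g w) = evalWord (fun b => h (g b)) w := by
  have : h.toAlgHom.comp (evalWord g) = evalWord (fun b => h (g b)) := by
    apply FreeAlgebra.hom_ext
    funext x
    rcases x with b | b
    · simp [evalWord]
    · simpa [evalWord] using map_star h (g b)
  exact DFunLike.congr_fun this w

lemma exists_evalWord_of_mem_adjoin (f : B → A) {a : A}
    (ha : a ∈ StarAlgebra.adjoin ℂ (Set.range f)) : ∃ w, evalWord f w = a := by
  have h : a ∈ Algebra.adjoin ℂ (Set.range f ∪ star (Set.range f)) := ha
  have hr : Set.range f ∪ star (Set.range f) = Set.range (Sum.elim f fun b => star (f b)) := by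
    rw [Set.Sum.elim_range]
    congr 1
    ext x
    simp only [Set.mem_star, Set.mem_range]
    exact exists_congr fun b => ⟨fun h => by rw [h, star_star], fun h => by rw [← h, star_star]⟩
  rw [hr, Algebra.adjoin_range_eq_range_freeAlgebra_lift] at h
  exact h

/-- If `g(B)` generates `C` and every ⋆-polynomial has at `f` at most the norm it has at `g`, then
`g b ↦ f b` extends to a ⋆-homomorphism `C → A`. -/
lemma exists_starAlgHom_of_norm_le (g : B → C) (f : B → A)
    (hg : (StarAlgebra.adjoin ℂ (Set.range g)).topologicalClosure = ⊤)
    (hle : ∀ w, ‖evalWord f w‖ ≤ ‖evalWord g w‖) :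
    ∃ h : C →⋆ₐ[ℂ] A, ∀ b, h (g b) = f b := by
  -- `S` is the graph of the map to be constructed.
  let S : StarSubalgebra ℂ (C × A) :=
    (StarAlgebra.adjoin ℂ (Set.range fun b => (g b, f b))).topologicalClosure
  have hSc : IsClosed (S : Set (C × A)) := StarSubalgebra.isClosed_topologicalClosure _
  have hmem : ∀ b, (g b, f b) ∈ S := fun b =>
    StarSubalgebra.le_topologicalClosure _ (StarAlgebra.subset_adjoin ℂ _ ⟨b, rfl⟩)
  have hS : ∀ z ∈ S, ‖z.2‖ ≤ ‖z.1‖ := by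
    have hcl : IsClosed {z : C × A | ‖z.2‖ ≤ ‖z.1‖} :=
      isClosed_le (by fun_prop) (by fun_prop)
    refine closure_minimal ?_ hcl
    intro z hz
    obtain ⟨w, rfl⟩ := exists_evalWord_of_mem_adjoin _ hz
    have h1 := map_evalWord (StarAlgHom.fst ℂ C A) (fun b => (g b, f b)) w
    have h2 := map_evalWord (StarAlgHom.snd ℂ C A) (fun b => (g b, f b)) w
    simp only [StarAlgHom.fst_apply, StarAlgHom.snd_apply] at h1 h2
    change ‖(evalWord (fun b => (g b, f b)) w).2‖ ≤ ‖(evalWord (fun b => (g b, f b)) w).1‖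
    rw [h1, h2]
    exact hle w
  let p : S →⋆ₐ[ℂ] C := (StarAlgHom.fst ℂ C A).comp S.subtype
  have hp : ∀ z : S, p z = z.1.1 := fun _ => rfl
  have hiso : Isometry p := by
    refine AddMonoidHomClass.isometry_of_norm p fun z => ?_
    have h1 : ‖z‖ = max ‖z.1.1‖ ‖z.1.2‖ := rfl
    rw [h1, hp, max_eq_left (hS z.1 z.2)]
  have : CompleteSpace S := hSc.completeSpace_coe
  have hrange : IsClosed (p.range : Set C) := by
    exact hiso.isClosedEmbedding.isClosed_range
  have htop : p.range = ⊤ := by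
    rw [eq_top_iff, ← hg]
    refine StarSubalgebra.topologicalClosure_minimal (StarAlgebra.adjoin_le ?_) hrange
    rintro _ ⟨b, rfl⟩
    exact ⟨⟨_, hmem b⟩, rfl⟩
  have hsurj : Function.Surjective p := fun c => by
    have : c ∈ p.range := by rw [htop]; trivial
    exact this
  let e := StarAlgEquiv.ofBijective p ⟨hiso.injective, hsurj⟩
  refine ⟨((StarAlgHom.snd ℂ C A).comp S.subtype).comp (e.symm : C →⋆ₐ[ℂ] S), fun b => ?_⟩
  have he : e.symm (g b) = ⟨_, hmem b⟩ := by
    rw [StarAlgEquiv.symm_apply_eq]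
    rfl
  change (e.symm (g b)).1.2 = f b
  rw [he]

lemma starAlgHom_ext_of_generate (g : B → C)
    (hg : (StarAlgebra.adjoin ℂ (Set.range g)).topologicalClosure = ⊤)
    {h k : C →⋆ₐ[ℂ] A} (hk : ∀ b, h (g b) = k (g b)) : h = k := by
  have hcont : ∀ l : C →⋆ₐ[ℂ] A, Continuous l := fun l =>
    AddMonoidHomClass.continuous_of_bound l 1 fun x => by
      rw [one_mul]; exact NonUnitalStarAlgHom.norm_apply_le l x
  have hle : (StarAlgebra.adjoin ℂ (Set.range g)).topologicalClosure
      ≤ StarAlgHom.equalizer h k := by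
    refine StarSubalgebra.topologicalClosure_minimal (StarAlgebra.adjoin_le ?_)
      (isClosed_eq (hcont h) (hcont k))
    rintro _ ⟨b, rfl⟩
    exact hk b
  rw [hg] at hle
  exact StarAlgHom.ext fun x => hle (StarSubalgebra.mem_top : x ∈ ⊤)

end Words

section Product

variable {I : Type} {A : I → Type} [∀ i, CStarAlgebra (A i)] [∀ i, Nontrivial (A i)]

/-- The `ℓ^∞`-product of nonzero unital C⋆-algebras is a unital C⋆-algebra. -/
noncomputable instance lpCStarAlgebra : CStarAlgebra (lp A ∞) where

/-- Evaluation at a coordinate of the `ℓ^∞`-product. -/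
noncomputable def lpEval (i : I) : lp A ∞ →⋆ₐ[ℂ] A i where
  toFun x := x i
  map_one' := rfl
  map_mul' _ _ := rfl
  map_zero' := rfl
  map_add' _ _ := rfl
  commutes' _ := rfl
  map_star' _ := rfl

end Product

section Free

variable (B : Ban)

/-- A contractive linear map from `B` to a nonzero unital C⋆-algebra. Nonzero algebras have
`‖1‖ = 1`, as the unit of an `ℓ^∞`-product requires; maps into the zero algebra are not needed to
generate the universal one. -/
structure BanRep : Type 1 where
  /-- The target C⋆-algebra. -/
  alg : Type
  [inst : CStarAlgebra alg]
  [nontrivial : Nontrivial alg]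
  /-- The contraction. -/
  map : B.carrier →L[ℂ] alg
  norm_le : ‖map‖ ≤ 1

attribute [instance] BanRep.inst BanRep.nontrivial

variable {B} in
/-- The norms of the values of all ⋆-polynomials at a contraction. -/
noncomputable def BanRep.profile (r : BanRep B) : FreeAlgebra ℂ (B.carrier ⊕ B.carrier) → ℝ :=
  fun w => ‖evalWord r.map w‖

/-- The profiles of contractions on `B`. Unlike the contractions themselves they form a type in the
lowest universe, over which products of C⋆-algebras can be taken. -/
abbrev Index : Type := Set.range (BanRep.profile (B := B))

variable {B} in
/-- A chosen contraction with the given profile. -/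
noncomputable def Index.rep (i : Index B) : BanRep B := i.2.choose

variable {B} in
lemma Index.profile_rep (i : Index B) : i.rep.profile = i.1 := i.2.choose_spec

/-- The `ℓ^∞`-product of the targets of the chosen contractions. -/
abbrev Big : Type := lp (fun i : Index B => i.rep.alg) ∞

variable {B} in
lemma norm_rep_le (i : Index B) (b : B.carrier) : ‖i.rep.map b‖ ≤ ‖b‖ := by
  simpa using i.rep.map.le_of_opNorm_le i.rep.norm_le b

/-- The contraction from `B` to the product whose coordinates are the chosen contractions. -/
noncomputable def toBig : B.carrier →ₗ[ℂ] Big B where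
  toFun b := ⟨fun i => i.rep.map b, memℓp_infty ⟨‖b‖, by
    rintro _ ⟨i, rfl⟩
    exact norm_rep_le i b⟩⟩
  map_add' x y := lp.ext (funext fun i => map_add i.rep.map x y)
  map_smul' c x := lp.ext (funext fun i => map_smul i.rep.map c x)

lemma norm_toBig_le (b : B.carrier) : ‖toBig B b‖ ≤ ‖b‖ :=
  lp.norm_le_of_forall_le (norm_nonneg b) fun i => norm_rep_le i b

/-- The underlying closed ⋆-subalgebra of the universal C⋆-algebra on `B`. -/
noncomputable abbrev freeSub : StarSubalgebra ℂ (Big B) :=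
  (StarAlgebra.adjoin ℂ (Set.range (toBig B))).topologicalClosure

noncomputable instance freeCStarAlgebra : CStarAlgebra (freeSub B) :=
  haveI : IsClosed (freeSub B : Set (Big B)) := StarSubalgebra.isClosed_topologicalClosure _
  StarSubalgebra.cstarAlgebra (freeSub B)

/-- The universal C⋆-algebra `F(B)` generated by a contractive linear image of `B`. -/
noncomputable def freeObj : CStarAlg := { carrier := freeSub B }

lemma toBig_mem (b : B.carrier) : toBig B b ∈ freeSub B :=
  StarSubalgebra.le_topologicalClosure _ (StarAlgebra.subset_adjoin ℂ _ ⟨b, rfl⟩)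

/-- The universal map `B → F(B)` as a linear map. -/
noncomputable def unitLin : B.carrier →ₗ[ℂ] freeSub B where
  toFun b := ⟨toBig B b, toBig_mem B b⟩
  map_add' x y := Subtype.ext (map_add (toBig B) x y)
  map_smul' c x := Subtype.ext (map_smul (toBig B) c x)

/-- The universal map `B → F(B)` as a morphism of Banach spaces. -/
noncomputable def unitHom : B ⟶ CStarForget.obj (freeObj B) :=
  ⟨(unitLin B).mkContinuous 1 fun b => by rw [one_mul]; exact norm_toBig_le B b,
    LinearMap.mkContinuous_norm_le _ zero_le_one _⟩

lemma generate_unitLin :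
    (StarAlgebra.adjoin ℂ (Set.range (unitLin B))).topologicalClosure = ⊤ := by
  set T := StarAlgebra.adjoin ℂ (Set.range (unitLin B)) with hT
  -- The image of `T` in the product contains `toBig B`, so its closure contains `freeSub B`.
  have hle : StarAlgebra.adjoin ℂ (Set.range (toBig B)) ≤ T.map (freeSub B).subtype := by
    refine StarAlgebra.adjoin_le ?_
    rintro _ ⟨b, rfl⟩
    exact ⟨unitLin B b, StarAlgebra.subset_adjoin ℂ _ ⟨b, rfl⟩, rfl⟩
  rw [eq_top_iff]
  intro x _
  change x ∈ closure (T : Set (freeSub B))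
  rw [closure_subtype]
  exact closure_mono hle x.2

variable {B}

/-- A contraction into the zero algebra satisfies this trivially; any other contraction has the
profile of one of the coordinates of the product. -/
lemma norm_evalWord_le {A : Type} [CStarAlgebra A] (f : B.carrier →L[ℂ] A) (hf : ‖f‖ ≤ 1)
    (w : FreeAlgebra ℂ (B.carrier ⊕ B.carrier)) :
    ‖evalWord f w‖ ≤ ‖evalWord (unitLin B) w‖ := by
  rcases subsingleton_or_nontrivial A with hA | hA
  · rw [Subsingleton.elim (evalWord f w) 0, norm_zero]
    exact norm_nonneg _
  · let i : Index B := ⟨_, ⟨{ alg := A, map := f, norm_le := hf }, rfl⟩⟩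
    have h1 : ‖evalWord i.rep.map w‖ = ‖evalWord f w‖ := congrFun i.profile_rep w
    let q : freeSub B →⋆ₐ[ℂ] i.rep.alg := (lpEval i).comp (freeSub B).subtype
    have h2 : q (evalWord (unitLin B) w) = evalWord i.rep.map w := map_evalWord q _ w
    rw [← h1, ← h2]
    exact NonUnitalStarAlgHom.norm_apply_le q _

lemma exists_desc {A : CStarAlg} (f : B ⟶ CStarForget.obj A) :
    ∃ h : freeSub B →⋆ₐ[ℂ] A.carrier, ∀ b, h (unitLin B b) = f.1 b :=
  exists_starAlgHom_of_norm_le (A := A.carrier) (unitLin B) (fun b => f.1 b) (generate_unitLin B)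
    (norm_evalWord_le (A := A.carrier) f.1 f.2)

lemma norm_unitHom (b : B.carrier) : ‖(unitHom B).1 b‖ = ‖b‖ := by
  refine le_antisymm (norm_toBig_le B b) ?_
  obtain ⟨φ, hφ, hb⟩ := exists_dual_vector'' ℂ b
  obtain ⟨h, hh⟩ := exists_starAlgHom_of_norm_le (unitLin B) φ (generate_unitLin B)
    (norm_evalWord_le φ hφ)
  have h1 : h (unitLin B b) = (‖b‖ : ℂ) := (hh b).trans hb
  have h2 : ‖h (unitLin B b)‖ ≤ ‖unitLin B b‖ := NonUnitalStarAlgHom.norm_apply_le h _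
  rw [h1] at h2
  simpa using! h2

/-- The universal property of `F(B)`. -/
noncomputable def homEquiv (B : Ban) (A : CStarAlg) :
    (freeObj B ⟶ A) ≃ (B ⟶ CStarForget.obj A) where
  toFun h := unitHom B ≫ CStarForget.map h
  invFun f := (exists_desc f).choose
  left_inv h := starAlgHom_ext_of_generate (A := A.carrier) (unitLin B) (generate_unitLin B)
    fun b => (exists_desc (unitHom B ≫ CStarForget.map h)).choose_spec b
  right_inv f := Subtype.ext (ContinuousLinearMap.ext (exists_desc f).choose_spec)

end Free

end BanCStar

open BanCStar

/-- The forgetful functor `G : C*Alg ⥤ Ban` has a left adjoint `F` whose unit is a linear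
isometry at every Banach space `B`; consequently `F` is faithful. -/
theorem cstarForget_isRightAdjoint :
    ∃ (F : Ban ⥤ CStarAlg) (adj : F ⊣ CStarForget),
      (∀ (B : Ban) (x : B.carrier), ‖(adj.unit.app B).1 x‖ = ‖x‖) ∧ F.Faithful := by
  let adj := Adjunction.adjunctionOfEquivLeft (G := CStarForget) homEquiv
    fun X Y Y' g h => by
      change unitHom X ≫ CStarForget.map (h ≫ g) = (unitHom X ≫ CStarForget.map h) ≫ _
      rw [Functor.map_comp, Category.assoc]
  have hunit : ∀ B, adj.unit.app B = unitHom B := fun B => by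
    have h : adj.unit.app B = homEquiv B _ (𝟙 _) := by simp [adj]
    rw [h]
    change unitHom B ≫ CStarForget.map (𝟙 (freeObj B)) = _
    rw [CategoryTheory.Functor.map_id, Category.comp_id]
  have hiso : ∀ (B : Ban) (x : B.carrier), ‖(adj.unit.app B).1 x‖ = ‖x‖ := fun B x => by
    rw [hunit]; exact norm_unitHom x
  refine ⟨_, adj, hiso, ⟨?_⟩⟩
  intro X Y f g hfg
  have key : f ≫ adj.unit.app Y = g ≫ adj.unit.app Y := by
    have h1 := adj.unit.naturality f
    have h2 := adj.unit.naturality g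
    simp only [Functor.id_map, Functor.comp_map] at h1 h2
    rw [h1, h2, hfg]
  refine Subtype.ext (ContinuousLinearMap.ext fun x => ?_)
  have hx : (adj.unit.app Y).1 (f.1 x) = (adj.unit.app Y).1 (g.1 x) :=
    congrArg (fun k : X ⟶ _ => k.1 x) key
  rw [← sub_eq_zero, ← norm_eq_zero, ← hiso Y (f.1 x - g.1 x), map_sub, hx, sub_self, norm_zero]
end
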